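/- Let V be the k-linear span of the set of monomials u of A with deg(u) − d(u) = 1, where for a monomial u with exponent function m we set deg(u) = Σ_{(i,r)} m(i,r) and d(u) = Σ_{(i,r)} r·m(i,r). Let ψ be the exponential automorphism of D₁, i.e. ψ(f) = Σ_{n < m} D₁^n(f)/n! whenever D₁^m(f) = 0. Then ψ maps V into V; in particular ψ restricts to an automorphism of the copy of the free Novikov algebra inside A. -/

import Mathlib

open MvPolynomial

/-!
Give `X (i, r)` the weight `1 - r`. Then `V` is the space of weighted homogeneous polynomials of
weight `1`, the derivation `δ` lowers weights by `1`, and `∂₁` preserves them. Since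
`w = y² - x z` has weight `2`, the factor `δ² w` has weight `0`, so `D₁` preserves weights.
As `∂₁` commutes with `δ` and kills `w`, it kills `δ² w`; hence `D₁ⁿ = ((1/2) δ² w)ⁿ ∂₁ⁿ`, which
vanishes on the variables for `n = 3`. So `ψ` sends each variable to a polynomial of the same
weight, and an automorphism that does this commutes with the projections onto the weighted
homogeneous components, so that it and its inverse both preserve each of them.
-/

namespace Novikov

section WeightedHomogeneous

variable {R σ τ M : Type*} [CommSemiring R]

theorem span_monomial_weight_eq [AddCommMonoid M] (w : σ → M) (n : M) :
    Submodule.span R {u : MvPolynomial σ R |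
      ∃ m : σ →₀ ℕ, u = monomial m 1 ∧ Finsupp.weight w m = n} =
      weightedHomogeneousSubmodule R w n := by
  rw [weightedHomogeneousSubmodule_eq_finsupp_supported, AddMonoidAlgebra.supported_eq_span_single]
  congr 1
  ext u
  constructor
  · rintro ⟨m, rfl, hm⟩
    exact ⟨m, hm, rfl⟩
  · rintro ⟨m, hm, rfl⟩
    exact ⟨m, rfl, hm⟩

theorem isWeightedHomogeneous_derivation_apply [AddCommMonoid M] {w : σ → M} {c n : M}
    {D : Derivation R (MvPolynomial σ R) (MvPolynomial σ R)}
    (hD : ∀ i, IsWeightedHomogeneous w (D (X i)) (w i + c))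
    {f : MvPolynomial σ R} (hf : IsWeightedHomogeneous w f n) :
    IsWeightedHomogeneous w (D f) (n + c) := by
  induction hf using IsWeightedHomogeneous.induction_on with
  | zero => simpa using isWeightedHomogeneous_zero R w (n + c)
  | add p q _ _ hp hq => simpa using hp.add hq
  | monomial m r hm =>
    have hD' : D = mkDerivation R fun i => D (X i) :=
      derivation_ext fun i => (mkDerivation_X R (fun i => D (X i)) i).symm
    rw [hD', mkDerivation_monomial]
    refine (weightedHomogeneousSubmodule R w _).smul_mem r (IsWeightedHomogeneous.sum _ _ _ ?_)
    intro i hi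
    have hweight : Finsupp.weight w (m - Finsupp.single i 1) + (w i + c) = n + c := by
      rw [← add_assoc, Finsupp.weight_sub_single_add (Finsupp.mem_support_iff.mp hi), hm]
    rw [← hweight]
    exact (isWeightedHomogeneous_monomial w _ _ rfl).mul (hD i)

theorem isWeightedHomogeneous_derivation_iterate [AddCommMonoid M] {w : σ → M} {n : M}
    {D : Derivation R (MvPolynomial σ R) (MvPolynomial σ R)}
    (hD : ∀ i, IsWeightedHomogeneous w (D (X i)) (w i))
    {f : MvPolynomial σ R} (hf : IsWeightedHomogeneous w f n) (j : ℕ) :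
    IsWeightedHomogeneous w (D^[j] f) n := by
  induction j with
  | zero => exact hf
  | succ j ih =>
    rw [Function.iterate_succ_apply', ← add_zero n]
    exact isWeightedHomogeneous_derivation_apply (fun i => by simpa using hD i) ih

variable [AddCommMonoid M] {w : σ → M} {v : τ → M} {n : M}
  {φ : MvPolynomial σ R →ₐ[R] MvPolynomial τ R}

theorem isWeightedHomogeneous_algHom_apply
    (hφ : ∀ i, IsWeightedHomogeneous v (φ (X i)) (w i))
    {f : MvPolynomial σ R} (hf : IsWeightedHomogeneous w f n) :
    IsWeightedHomogeneous v (φ f) n := by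
  induction hf using IsWeightedHomogeneous.induction_on with
  | zero => simpa using isWeightedHomogeneous_zero R v n
  | add p q _ _ hp hq => simpa using hp.add hq
  | monomial m r hm =>
    rw [aeval_unique φ, aeval_monomial, algebraMap_eq, ← hm, Finsupp.weight_apply]
    exact (IsWeightedHomogeneous.prod _ _ _ fun i _ => (hφ i).pow (m i)).C_mul r

theorem algHom_weightedHomogeneousComponent
    (hφ : ∀ i, IsWeightedHomogeneous v (φ (X i)) (w i)) (f : MvPolynomial σ R) :
    φ (weightedHomogeneousComponent w n f) = weightedHomogeneousComponent v n (φ f) := by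
  classical
  induction f using MvPolynomial.induction_on' with
  | add p q hp hq => simp only [map_add, hp, hq]
  | monomial m r =>
    have hm := isWeightedHomogeneous_monomial w m r rfl
    rw [weightedHomogeneousComponent_of_mem hm,
      weightedHomogeneousComponent_of_mem (isWeightedHomogeneous_algHom_apply hφ hm),
      apply_ite φ, map_zero]

theorem isWeightedHomogeneous_algHom_apply_iff (hinj : Function.Injective φ)
    (hφ : ∀ i, IsWeightedHomogeneous v (φ (X i)) (w i)) {f : MvPolynomial σ R} :
    IsWeightedHomogeneous v (φ f) n ↔ IsWeightedHomogeneous w f n := by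
  refine ⟨fun h => ?_, isWeightedHomogeneous_algHom_apply hφ⟩
  have hcomponent : weightedHomogeneousComponent w n f = f := hinj <| by
    rw [algHom_weightedHomogeneousComponent hφ, h.weightedHomogeneousComponent_same]
  rw [← hcomponent]
  exact weightedHomogeneousComponent_isWeightedHomogeneous n f

end WeightedHomogeneous

theorem isWeightedHomogeneous_exp_apply_iff {k σ M : Type*} [Field k] [AddCommMonoid M]
    {w : σ → M} {n : M} {D : Derivation k (MvPolynomial σ k) (MvPolynomial σ k)}
    (hD : ∀ i, IsWeightedHomogeneous w (D (X i)) (w i)) (hnil : ∀ i, ∃ m, D^[m] (X i) = 0)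
    {ψ : MvPolynomial σ k →ₐ[k] MvPolynomial σ k} (hinj : Function.Injective ψ)
    (hψ : ∀ i m, D^[m] (X i) = 0 →
      ψ (X i) = ∑ j ∈ Finset.range m, (j.factorial : k)⁻¹ • D^[j] (X i))
    {f : MvPolynomial σ k} :
    IsWeightedHomogeneous w (ψ f) n ↔ IsWeightedHomogeneous w f n := by
  refine isWeightedHomogeneous_algHom_apply_iff hinj fun i => ?_
  obtain ⟨m, hm⟩ := hnil i
  rw [hψ i m hm]
  exact IsWeightedHomogeneous.sum _ _ _ fun j _ =>
    (weightedHomogeneousSubmodule k w (w i)).smul_mem _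
      (isWeightedHomogeneous_derivation_iterate hD (isWeightedHomogeneous_X k w i) j)

theorem derivation_smul_iterate_apply {R A : Type*} [CommSemiring R] [CommSemiring A] [Algebra R A]
    {D : Derivation R A A} {a : A} (ha : D a = 0) (n : ℕ) (f : A) :
    (a • D)^[n] f = a ^ n * D^[n] f := by
  induction n with
  | zero => simp
  | succ n ih =>
    rw [Function.iterate_succ_apply', Function.iterate_succ_apply', ih, Derivation.smul_apply,
      Derivation.leibniz, Derivation.leibniz_pow, ha]
    simp only [smul_eq_mul, smul_zero, mul_zero, add_zero]
    ring

section DifferentialPolynomials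

/-- The weight `1 - r` of the variable `X (i, r)`, the `r`-th derivative of the `i`-th generator.
The polynomials of weight `1` form the copy of the free Novikov algebra inside the differential
polynomials. It is integer-valued because it is negative for `r ≥ 2`. -/
def novikovWeight {ι : Type*} (p : ι × ℕ) : ℤ := 1 - p.2

theorem weight_novikovWeight {ι : Type*} (m : ι × ℕ →₀ ℕ) :
    Finsupp.weight novikovWeight m =
      ((m.sum fun _ e => e : ℕ) : ℤ) - ((m.sum fun p e => p.2 * e : ℕ) : ℤ) := by
  simp only [Finsupp.weight_apply, Finsupp.sum, Nat.cast_sum, ← Finset.sum_sub_distrib]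
  refine Finset.sum_congr rfl fun p _ => ?_
  simp only [novikovWeight, nsmul_eq_mul, Nat.cast_mul]
  ring

theorem weight_novikovWeight_eq_one_iff {ι : Type*} (m : ι × ℕ →₀ ℕ) :
    Finsupp.weight novikovWeight m = 1 ↔
      (m.sum fun _ e => e) = (m.sum fun p e => p.2 * e) + 1 := by
  rw [weight_novikovWeight]
  omega

variable (R : Type*) [CommRing R]

theorem isWeightedHomogeneous_X_novikovWeight {ι : Type*} (i : ι) (r : ℕ) :
    IsWeightedHomogeneous novikovWeight (X (i, r) : MvPolynomial (ι × ℕ) R) (1 - r) :=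
  isWeightedHomogeneous_X R novikovWeight (i, r)

/-- The total derivative on differential polynomials in the generators indexed by `ι`: the
derivation `δ` with `δ (X (i, r)) = X (i, r + 1)`. -/
noncomputable def totalDerivation (ι : Type*) :
    Derivation R (MvPolynomial (ι × ℕ) R) (MvPolynomial (ι × ℕ) R) :=
  mkDerivation R fun p => X (p.1, p.2 + 1)

theorem totalDerivation_X {ι : Type*} (i : ι) (r : ℕ) :
    totalDerivation R ι (X (i, r)) = X (i, r + 1) :=
  mkDerivation_X R _ _

/-- The basic Weitzenböck derivation `x ↦ 2y ↦ 2z ↦ 0`, extended to differential polynomials in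
`x, y, z` so as to commute with the total derivative: the derivation `∂₁`. The generators
`x, y, z` have indices `0, 1, 2`. -/
noncomputable def weitzenboeck :
    Derivation R (MvPolynomial (Fin 3 × ℕ) R) (MvPolynomial (Fin 3 × ℕ) R) :=
  mkDerivation R fun p => ![2 * X (1, p.2), X (2, p.2), 0] p.1

theorem weitzenboeck_X_zero (r : ℕ) : weitzenboeck R (X (0, r)) = 2 * X (1, r) :=
  mkDerivation_X R _ _

theorem weitzenboeck_X_one (r : ℕ) : weitzenboeck R (X (1, r)) = X (2, r) :=
  mkDerivation_X R _ _

theorem weitzenboeck_X_two (r : ℕ) : weitzenboeck R (X (2, r)) = 0 :=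
  mkDerivation_X R _ _

/-- The quadratic form `w = y² - x z`, an invariant of the Weitzenböck derivation. -/
noncomputable def discriminant : MvPolynomial (Fin 3 × ℕ) R :=
  X (1, 0) ^ 2 - X (0, 0) * X (2, 0)

theorem totalDerivation_weitzenboeck_comm (f : MvPolynomial (Fin 3 × ℕ) R) :
    totalDerivation R (Fin 3) (weitzenboeck R f) =
      weitzenboeck R (totalDerivation R (Fin 3) f) := by
  have hcommutator : ⁅totalDerivation R (Fin 3), weitzenboeck R⁆ = 0 := by
    refine derivation_ext fun ⟨i, r⟩ => ?_
    fin_cases i <;>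
      simp [Derivation.commutator_apply, totalDerivation_X, weitzenboeck_X_zero,
        weitzenboeck_X_one, weitzenboeck_X_two, two_mul]
  rw [← sub_eq_zero, ← Derivation.commutator_apply, hcommutator, Derivation.zero_apply]

theorem weitzenboeck_discriminant : weitzenboeck R (discriminant R) = 0 := by
  simp only [discriminant, pow_two, map_sub, Derivation.leibniz, weitzenboeck_X_zero,
    weitzenboeck_X_one, weitzenboeck_X_two, smul_eq_mul]
  ring

theorem weitzenboeck_totalDerivation_totalDerivation_discriminant :
    weitzenboeck R (totalDerivation R (Fin 3) (totalDerivation R (Fin 3) (discriminant R))) =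
      0 := by
  rw [← totalDerivation_weitzenboeck_comm, ← totalDerivation_weitzenboeck_comm,
    weitzenboeck_discriminant, map_zero, map_zero]

theorem weitzenboeck_iterate_three_X (p : Fin 3 × ℕ) : (weitzenboeck R)^[3] (X p) = 0 := by
  obtain ⟨i, r⟩ := p
  fin_cases i <;>
    simp [weitzenboeck_X_zero, weitzenboeck_X_one, weitzenboeck_X_two, two_mul]

variable {R} in
theorem isWeightedHomogeneous_totalDerivation {ι : Type*} {f : MvPolynomial (ι × ℕ) R} {n : ℤ}
    (hf : IsWeightedHomogeneous novikovWeight f n) :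
    IsWeightedHomogeneous novikovWeight (totalDerivation R ι f) (n - 1) := by
  refine isWeightedHomogeneous_derivation_apply (fun p => ?_) hf
  have hweight : novikovWeight p + -1 = 1 - ((p.2 + 1 : ℕ) : ℤ) := by
    simp only [novikovWeight]
    omega
  rw [hweight, totalDerivation_X]
  exact isWeightedHomogeneous_X_novikovWeight R p.1 (p.2 + 1)

theorem isWeightedHomogeneous_weitzenboeck_X (p : Fin 3 × ℕ) :
    IsWeightedHomogeneous novikovWeight (weitzenboeck R (X p)) (novikovWeight p) := by
  obtain ⟨i, r⟩ := p
  change IsWeightedHomogeneous novikovWeight _ (1 - (r : ℤ))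
  fin_cases i
  · simpa only [Fin.zero_eta, weitzenboeck_X_zero, two_mul] using
      (isWeightedHomogeneous_X_novikovWeight R 1 r).add
        (isWeightedHomogeneous_X_novikovWeight R 1 r)
  · simpa only [Fin.mk_one, weitzenboeck_X_one] using isWeightedHomogeneous_X_novikovWeight R 2 r
  · simpa only [Fin.reduceFinMk, weitzenboeck_X_two] using isWeightedHomogeneous_zero R _ _

theorem isWeightedHomogeneous_discriminant :
    IsWeightedHomogeneous novikovWeight (discriminant R) 2 := by
  have hX (i : Fin 3) : IsWeightedHomogeneous novikovWeight (X (i, 0) : MvPolynomial _ R) 1 := by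
    simpa using isWeightedHomogeneous_X_novikovWeight R i 0
  exact ((hX 1).pow 2).sub ((hX 0).mul (hX 2))

end DifferentialPolynomials

section ExponentialDerivation

/-- The derivation `D₁ = (1/2) δ²(w) ∂₁`, whose exponential is the automorphism `ψ`. -/
noncomputable def scaledWeitzenboeck (k : Type*) [Field k] :
    Derivation k (MvPolynomial (Fin 3 × ℕ) k) (MvPolynomial (Fin 3 × ℕ) k) :=
  (C (2 : k)⁻¹ * totalDerivation k (Fin 3) (totalDerivation k (Fin 3) (discriminant k))) •
    weitzenboeck k

variable (k : Type*) [Field k]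

theorem scaledWeitzenboeck_iterate_three_X (p : Fin 3 × ℕ) :
    (scaledWeitzenboeck k)^[3] (X p) = 0 := by
  rw [scaledWeitzenboeck, derivation_smul_iterate_apply, weitzenboeck_iterate_three_X, mul_zero]
  rw [← smul_eq_C_mul, Derivation.map_smul,
    weitzenboeck_totalDerivation_totalDerivation_discriminant, smul_zero]

theorem isWeightedHomogeneous_scaledWeitzenboeck_X (p : Fin 3 × ℕ) :
    IsWeightedHomogeneous novikovWeight (scaledWeitzenboeck k (X p)) (novikovWeight p) := by
  have hderiv := isWeightedHomogeneous_totalDerivation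
    (isWeightedHomogeneous_totalDerivation (isWeightedHomogeneous_discriminant k))
  simpa [scaledWeitzenboeck] using
    (hderiv.C_mul (2 : k)⁻¹).mul (isWeightedHomogeneous_weitzenboeck_X k p)

end ExponentialDerivation

end Novikov

open Novikov

/-- The exponential automorphism `ψ = exp D₁` maps the span `V` of the monomials with
`deg - d = 1` into itself, and restricts to an automorphism of this copy of the free
Novikov algebra: `ψ` maps `V` onto `V`. -/
theorem exp_D1_preserves_novikov (k : Type*) [Field k] [CharZero k]
    (δ d1 D1 : Derivation k (MvPolynomial (Fin 3 × ℕ) k) (MvPolynomial (Fin 3 × ℕ) k))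
    (hδ : ∀ (i : Fin 3) (r : ℕ), δ (X (i, r)) = X (i, r + 1))
    (hd1x : ∀ r : ℕ, d1 (X ((0 : Fin 3), r)) = 2 * X ((1 : Fin 3), r))
    (hd1y : ∀ r : ℕ, d1 (X ((1 : Fin 3), r)) = X ((2 : Fin 3), r))
    (hd1z : ∀ r : ℕ, d1 (X ((2 : Fin 3), r)) = 0)
    (w : MvPolynomial (Fin 3 × ℕ) k)
    (hw : w = X ((1 : Fin 3), (0 : ℕ)) ^ 2 - X ((0 : Fin 3), (0 : ℕ)) * X ((2 : Fin 3), (0 : ℕ)))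
    (hD1 : ∀ f : MvPolynomial (Fin 3 × ℕ) k, D1 f = C ((2 : k)⁻¹) * δ (δ w) * d1 f)
    (ψ : MvPolynomial (Fin 3 × ℕ) k ≃ₐ[k] MvPolynomial (Fin 3 × ℕ) k)
    (hψ : ∀ (f : MvPolynomial (Fin 3 × ℕ) k) (m : ℕ), (⇑D1)^[m] f = 0 →
      ψ f = ∑ n ∈ Finset.range m, (n.factorial : k)⁻¹ • (⇑D1)^[n] f) :
    (∀ f ∈ Submodule.span k {u : MvPolynomial (Fin 3 × ℕ) k |
        ∃ m : (Fin 3 × ℕ) →₀ ℕ, u = monomial m 1 ∧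
          (m.sum fun _ e => e) = (m.sum fun p e => p.2 * e) + 1},
      ψ f ∈ Submodule.span k {u : MvPolynomial (Fin 3 × ℕ) k |
        ∃ m : (Fin 3 × ℕ) →₀ ℕ, u = monomial m 1 ∧
          (m.sum fun _ e => e) = (m.sum fun p e => p.2 * e) + 1}) ∧
    (∀ g ∈ Submodule.span k {u : MvPolynomial (Fin 3 × ℕ) k |
        ∃ m : (Fin 3 × ℕ) →₀ ℕ, u = monomial m 1 ∧
          (m.sum fun _ e => e) = (m.sum fun p e => p.2 * e) + 1},
      ∃ f ∈ Submodule.span k {u : MvPolynomial (Fin 3 × ℕ) k |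
        ∃ m : (Fin 3 × ℕ) →₀ ℕ, u = monomial m 1 ∧
          (m.sum fun _ e => e) = (m.sum fun p e => p.2 * e) + 1}, ψ f = g) := by
  obtain rfl : δ = totalDerivation k (Fin 3) :=
    derivation_ext fun ⟨i, r⟩ => by rw [hδ, totalDerivation_X]
  obtain rfl : d1 = weitzenboeck k := derivation_ext fun ⟨i, r⟩ => by
    fin_cases i
    exacts [(hd1x r).trans (weitzenboeck_X_zero k r).symm,
      (hd1y r).trans (weitzenboeck_X_one k r).symm, (hd1z r).trans (weitzenboeck_X_two k r).symm]
  obtain rfl : D1 = scaledWeitzenboeck k := Derivation.ext fun f => by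
    rw [hD1, hw]
    rfl
  have hψ_iff (f : MvPolynomial (Fin 3 × ℕ) k) :
      IsWeightedHomogeneous novikovWeight (ψ f) 1 ↔ IsWeightedHomogeneous novikovWeight f 1 :=
    isWeightedHomogeneous_exp_apply_iff (ψ := ψ.toAlgHom)
      (isWeightedHomogeneous_scaledWeitzenboeck_X k)
      (fun p => ⟨3, scaledWeitzenboeck_iterate_three_X k p⟩) ψ.injective (fun p => hψ (X p))
  simp only [← weight_novikovWeight_eq_one_iff, span_monomial_weight_eq,
    mem_weightedHomogeneousSubmodule]
  exact ⟨fun f => (hψ_iff f).mpr,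
    fun g hg => ⟨ψ.symm g, (hψ_iff _).mp (by simpa using hg), ψ.apply_symm_apply g⟩⟩
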